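/- arXiv:2211.09914 — 4 statements merged into one kernel-verified Lean document; each statement's English description precedes it below -/
import Mathlib

section
/- Let τ > 0 and let F : ℝ → ℝ be infinitely differentiable. Let y₀ : [−τ, 0] → ℝ be continuous and let y : [−τ, ∞) → ℝ be a continuous function with y = y₀ on [−τ, 0] which is differentiable on (0, ∞) with y′(t) = F(y(t − τ)) for all t > 0. Then for every integer n ≥ 1, the restriction of y to the open interval ((n−1)τ, ∞) is n times continuously differentiable. In particular the solution obtained by the method of steps gains one degree of differentiability on each successive interval of length τ. -/
/-!
If `y` is `Cⁿ` on `(a - τ, ∞)`, then `t ↦ F (y (t - τ))` is `Cⁿ` on `(a, ∞)`; being the derivative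
of `y` there, it makes `y` of class `Cⁿ⁺¹` on `(a, ∞)`. Iterating this from the continuity of `y` on
`(-τ, ∞)` gains one derivative per delay.
-/

open Set
open scoped ContDiff

theorem contDiffOn_succ_of_hasDerivAt {𝕜 E : Type*} [NontriviallyNormedField 𝕜]
    [NormedAddCommGroup E] [NormedSpace 𝕜 E] {f f' : 𝕜 → E} {s : Set 𝕜} {n : WithTop ℕ∞}
    (hn : n ≠ ω) (hs : IsOpen s) (hf : ∀ t ∈ s, HasDerivAt f (f' t) t)
    (hf' : ContDiffOn 𝕜 n f' s) :
    ContDiffOn 𝕜 (n + 1) f s :=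
  (contDiffOn_succ_iff_deriv_of_isOpen hs).2
    ⟨fun t ht => (hf t ht).differentiableAt.differentiableWithinAt, fun h => absurd h hn,
      hf'.congr fun t ht => (hf t ht).deriv⟩

section

variable {E : Type*} [NormedAddCommGroup E] [NormedSpace ℝ E] {τ : ℝ} {F : E → E} {y : ℝ → E}

theorem contDiffOn_succ_of_hasDerivAt_delay {a : ℝ} {n : WithTop ℕ∞} (hn : n ≠ ω)
    (hF : ContDiff ℝ n F)
    (hode : ∀ t, a < t → HasDerivAt y (F (y (t - τ))) t)
    (hy : ContDiffOn ℝ n y (Ioi (a - τ))) :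
    ContDiffOn ℝ (n + 1) y (Ioi a) := by
  have delayed : ContDiffOn ℝ n (fun t => y (t - τ)) (Ioi a) :=
    hy.comp (by fun_prop) fun _ ht => sub_lt_sub_right ht τ
  exact contDiffOn_succ_of_hasDerivAt hn isOpen_Ioi hode (hF.comp_contDiffOn delayed)

theorem method_of_steps_smoothing_general {n : ℕ} (hτ : 0 ≤ τ) (hF : ContDiff ℝ n F)
    (hy : ContinuousOn y (Ioi (-τ)))
    (hode : ∀ t, 0 < t → HasDerivAt y (F (y (t - τ))) t) :
    ContDiffOn ℝ (n + 1) y (Ioi (n * τ)) := by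
  induction n with
  | zero =>
    have hy₀ : ContDiffOn ℝ (0 : ℕ) y (Ioi (0 - τ)) := by simpa using hy
    simpa using contDiffOn_succ_of_hasDerivAt_delay (by simp) hF hode hy₀
  | succ n ih =>
    have hnτ : 0 ≤ ((n + 1 : ℕ) : ℝ) * τ := by positivity
    have shift : ((n + 1 : ℕ) : ℝ) * τ - τ = n * τ := by push_cast; ring
    refine contDiffOn_succ_of_hasDerivAt_delay (by simp) hF
      (fun t ht => hode t (hnτ.trans_lt ht)) ?_
    rw [shift]
    exact_mod_cast ih (hF.of_le (by exact_mod_cast n.le_succ))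

end

/-- For τ > 0 and smooth `F`, any solution of the constant-delay
equation `y'(t) = F (y (t - τ))` with continuous history `y₀` gains one degree of
differentiability on each successive interval of length τ: for every `n ≥ 1`, `y`
is `Cⁿ` on the open interval `((n-1)τ, ∞)`. -/
theorem method_of_steps_smoothing
    (τ : ℝ) (hτ : 0 < τ) (F : ℝ → ℝ) (hF : ContDiff ℝ (⊤ : ℕ∞) F)
    (y₀ y : ℝ → ℝ)
    (hy₀ : ContinuousOn y₀ (Set.Icc (-τ) 0))
    (hy : ContinuousOn y (Set.Ici (-τ)))
    (hist : ∀ t ∈ Set.Icc (-τ) (0 : ℝ), y t = y₀ t)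
    (hode : ∀ t : ℝ, 0 < t → HasDerivAt y (F (y (t - τ))) t)
    (n : ℕ) (hn : 1 ≤ n) :
    ContDiffOn ℝ n y (Set.Ioi (((n : ℝ) - 1) * τ)) := by
  obtain ⟨m, rfl⟩ := Nat.exists_eq_add_of_le' hn
  simpa using method_of_steps_smoothing_general hτ.le (contDiff_infty.1 hF m)
    (hy.mono Ioi_subset_Ici_self) hode
end

section
/- Fix real numbers ℓ > 0, K₂ > 0 and c ∈ ℝ with |c| ≤ K₂. Let X = {f ∈ C([0,1/2], ℝ) : f(0) = c, sup_{t∈[0,1/2]} |f(t)| ≤ K₂, f is differentiable on (0,1/2) with |f′(t)| ≤ ℓ for all t ∈ (0,1/2)}, and for f, g ∈ X set d(f, g) = sup_{t∈(0,1/2)} |f′(t) − g′(t)|. Then d is a metric on X and (X, d) is a complete metric space. -/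
/-- The distance `d(f,g) = sup_{t ∈ (0,1/2)} |f'(t) - g'(t)|`. -/
noncomputable def dd (f g : ℝ → ℝ) : ℝ :=
  ⨆ t : Set.Ioo (0 : ℝ) (1 / 2), |deriv f t.1 - deriv g t.1|

/-!
The map `f ↦ f'` sends `X` into the Banach space `ℓ^∞((0, 1/2))` of bounded functions, and `d` is
the distance that it pulls back. Since all members of `X` agree at `0`, the mean value inequality
bounds the uniform distance of `f` and `g` by a multiple of `d f g`, so the map is injective.
Its range is closed: if `fₙ'` converges uniformly, then so does `fₙ`, the limit is differentiable
with derivative `lim fₙ'`, and the conditions defining `X` pass to the limit. A closed subset of a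
Banach space is complete.
-/

open Set Filter Topology
open scoped NNReal ENNReal

theorem completeSpace_comap_of_isClosed_range {α β : Type*} [uβ : UniformSpace β]
    [CompleteSpace β] {φ : α → β} (hφ : IsClosed (range φ)) :
    @CompleteSpace α (uβ.comap φ) := by
  let : UniformSpace α := uβ.comap φ
  exact (IsUniformInducing.mk rfl).completeSpace hφ.isComplete

theorem uniformCauchySeqOn_of_dist_le_mul {α β γ : Type*} [PseudoMetricSpace β]
    [PseudoMetricSpace γ] {F : ℕ → α → β} {v : ℕ → γ} {s : Set α} {C : ℝ} (hv : CauchySeq v)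
    (hF : ∀ m n, ∀ x ∈ s, dist (F m x) (F n x) ≤ C * dist (v m) (v n)) :
    UniformCauchySeqOn F atTop s := by
  intro U hU
  obtain ⟨ε, hε, hεU⟩ := Metric.mem_uniformity_dist.1 hU
  have htendsto : Tendsto (fun p : ℕ × ℕ => C * dist (v p.1) (v p.2)) atTop (𝓝 0) := by
    simpa only [mul_zero] using (cauchySeq_iff_tendsto_dist_atTop_0.1 hv).const_mul C
  rw [prod_atTop_atTop_eq]
  filter_upwards [htendsto.eventually_lt_const hε] with p hp x hx
  exact hεU ((hF p.1 p.2 x hx).trans_lt hp)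

theorem exists_tendstoUniformlyOn_of_uniformCauchySeqOn {ι α β : Type*} [UniformSpace β]
    [CompleteSpace β] [Nonempty β] {l : Filter ι} [NeBot l] {F : ι → α → β} {s : Set α}
    (hF : UniformCauchySeqOn F l s) : ∃ G, TendstoUniformlyOn F G l s := by
  choose! G hG using fun x (hx : x ∈ s) => CompleteSpace.complete (hF.cauchy_map hx)
  exact ⟨G, hF.tendstoUniformlyOn_of_tendsto hG⟩

theorem differentiableAt_and_tendsto_deriv_of_uniformCauchySeqOn {ι 𝕜 E : Type*} [RCLike 𝕜]
    [NormedAddCommGroup E] [NormedSpace 𝕜 E] [CompleteSpace E] {l : Filter ι} [NeBot l]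
    {u : ι → 𝕜 → E} {F : 𝕜 → E} {s : Set 𝕜} (hs : IsOpen s)
    (hdiff : ∀ n, ∀ t ∈ s, DifferentiableAt 𝕜 (u n) t)
    (hderiv : UniformCauchySeqOn (fun n => deriv (u n)) l s)
    (hF : ∀ t ∈ s, Tendsto (fun n => u n t) l (𝓝 (F t))) {t : 𝕜} (ht : t ∈ s) :
    DifferentiableAt 𝕜 F t ∧ Tendsto (fun n => deriv (u n) t) l (𝓝 (deriv F t)) := by
  obtain ⟨G, hG⟩ := exists_tendstoUniformlyOn_of_uniformCauchySeqOn hderiv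
  have hFG : HasDerivAt F (G t) t := hasDerivAt_of_tendstoUniformlyOn hs hG
    (Eventually.of_forall fun n x hx => (hdiff n x hx).hasDerivAt) hF ht
  exact ⟨hFG.differentiableAt, hFG.deriv ▸ hG.tendsto_at ht⟩

section BoundedDeriv

variable {E : Type*} [NormedAddCommGroup E] [NormedSpace ℝ E] {a b K ℓ : ℝ} {c : E}

theorem lipschitzOnWith_Icc_of_nnnorm_deriv_le {f : ℝ → E} {C : ℝ≥0} (hab : a < b)
    (hcont : ContinuousOn f (Icc a b)) (hdiff : ∀ t ∈ Ioo a b, DifferentiableAt ℝ f t)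
    (hbound : ∀ t ∈ Ioo a b, ‖deriv f t‖₊ ≤ C) : LipschitzOnWith C f (Icc a b) := by
  rw [← closure_Ioo hab.ne] at hcont ⊢
  exact ((convex_Ioo a b).lipschitzOnWith_of_nnnorm_deriv_le hdiff hbound).closure hcont

/-- The space `C^{0,ℓ}_0([a, b])` of functions with value `c` at `a`, norm at most `K` and
derivative of norm at most `ℓ` on `(a, b)`. A function on `[a, b]` is encoded by its extension to
`ℝ` that is constant on either side of the interval. -/
def boundedDerivSet (a b : ℝ) (c : E) (K ℓ : ℝ) : Set (ℝ → E) :=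
  {f | ContinuousOn f (Icc a b) ∧ f a = c ∧ (∀ t ∈ Icc a b, ‖f t‖ ≤ K) ∧
    (∀ t ∈ Ioo a b, DifferentiableAt ℝ f t ∧ ‖deriv f t‖ ≤ ℓ) ∧
    (∀ t : ℝ, t ≤ a → f t = f a) ∧ (∀ t : ℝ, b ≤ t → f t = f b)}

namespace boundedDerivSet

theorem differentiableAt_of_mem {f : ℝ → E} (hf : f ∈ boundedDerivSet a b c K ℓ) {t : ℝ}
    (ht : t ∈ Ioo a b) : DifferentiableAt ℝ f t :=
  (hf.2.2.2.1 t ht).1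

theorem norm_deriv_le_of_mem {f : ℝ → E} (hf : f ∈ boundedDerivSet a b c K ℓ) {t : ℝ}
    (ht : t ∈ Ioo a b) : ‖deriv f t‖ ≤ ℓ :=
  (hf.2.2.2.1 t ht).2

theorem apply_projIcc {f : ℝ → E} (hab : a ≤ b) (hf : f ∈ boundedDerivSet a b c K ℓ) (t : ℝ) :
    f (projIcc a b hab t) = f t := by
  obtain ⟨-, -, -, -, hleft, hright⟩ := hf
  rcases le_total t a with hta | hat
  · rw [projIcc_of_le_left hab hta, hleft t hta]
  rcases le_total b t with hbt | htb
  · rw [projIcc_of_right_le hab hbt, hright t hbt]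
  · rw [projIcc_of_mem hab ⟨hat, htb⟩]

theorem norm_sub_le_mul {f g : ℝ → E} {C : ℝ≥0} (hab : a < b)
    (hf : f ∈ boundedDerivSet a b c K ℓ) (hg : g ∈ boundedDerivSet a b c K ℓ)
    (hC : ∀ t ∈ Ioo a b, ‖deriv f t - deriv g t‖ ≤ C) (t : ℝ) :
    ‖f t - g t‖ ≤ (b - a) * C := by
  have hlip : LipschitzOnWith C (f - g) (Icc a b) := by
    refine lipschitzOnWith_Icc_of_nnnorm_deriv_le hab (hf.1.sub hg.1)
      (fun s hs => (differentiableAt_of_mem hf hs).sub (differentiableAt_of_mem hg hs))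
      fun s hs => ?_
    rw [deriv_sub (differentiableAt_of_mem hf hs) (differentiableAt_of_mem hg hs)]
    exact hC s hs
  rw [← apply_projIcc hab.le hf t, ← apply_projIcc hab.le hg t]
  set x : Icc a b := projIcc a b hab.le t
  have ha : (f - g) a = 0 := by rw [Pi.sub_apply, hf.2.1, hg.2.1, sub_self]
  calc ‖f x - g x‖ = dist ((f - g) x) ((f - g) a) := by
        rw [ha, dist_zero_right, Pi.sub_apply]
    _ ≤ C * dist (x : ℝ) a := hlip.dist_le_mul x x.2 a (left_mem_Icc.2 hab.le)
    _ ≤ C * (b - a) := by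
        gcongr
        rw [Real.dist_eq, abs_of_nonneg (sub_nonneg.2 x.2.1)]
        exact sub_le_sub_right x.2.2 a
    _ = (b - a) * C := mul_comm _ _

theorem mem_of_tendstoUniformlyOn {ι : Type*} {l : Filter ι} [NeBot l] {u : ι → ℝ → E}
    {F : ℝ → E} (hu : ∀ n, u n ∈ boundedDerivSet a b c K ℓ) (hF : TendstoUniformlyOn u F l univ)
    (hderiv : ∀ t ∈ Ioo a b,
      DifferentiableAt ℝ F t ∧ Tendsto (fun n => deriv (u n) t) l (𝓝 (deriv F t))) :
    F ∈ boundedDerivSet a b c K ℓ := by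
  have hlim (t : ℝ) : Tendsto (fun n => u n t) l (𝓝 (F t)) := hF.tendsto_at (mem_univ t)
  have eq_of_forall_eq {s t : ℝ} (h : ∀ n, u n s = u n t) : F s = F t :=
    tendsto_nhds_unique (hlim s) ((hlim t).congr fun n => (h n).symm)
  choose hcont hleft_eq hnorm hu_deriv hleft hright using hu
  refine ⟨?_, ?_, fun t ht => ?_, fun t ht => ⟨(hderiv t ht).1, ?_⟩, fun t ht => ?_,
    fun t ht => ?_⟩
  · exact (hF.mono (subset_univ _)).continuousOn (Frequently.of_forall hcont)
  · exact tendsto_nhds_unique (hlim a) (tendsto_const_nhds.congr fun n => (hleft_eq n).symm)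
  · exact le_of_tendsto' (hlim t).norm fun n => hnorm n t ht
  · exact le_of_tendsto' (hderiv t ht).2.norm fun n => (hu_deriv n t ht).2
  · exact eq_of_forall_eq fun n => hleft n t ht
  · exact eq_of_forall_eq fun n => hright n t ht

/-- The derivative on `(a, b)`, as an element of the Banach space `ℓ^∞((a, b), E)` of bounded
functions; the metric of the space is pulled back along this map. -/
noncomputable def derivLp (f : boundedDerivSet a b c K ℓ) : lp (fun _ : Ioo a b => E) ∞ :=
  ⟨fun t => deriv f.1 t, memℓp_infty ⟨ℓ, forall_mem_range.2 fun t => norm_deriv_le_of_mem f.2 t.2⟩⟩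

theorem norm_deriv_sub_le_dist_derivLp (f g : boundedDerivSet a b c K ℓ) {t : ℝ}
    (ht : t ∈ Ioo a b) : ‖deriv f.1 t - deriv g.1 t‖ ≤ dist (derivLp f) (derivLp g) :=
  dist_eq_norm (derivLp f) (derivLp g) ▸
    lp.norm_apply_le_norm ENNReal.top_ne_zero (derivLp f - derivLp g) ⟨t, ht⟩

theorem norm_sub_le_mul_dist_derivLp (hab : a < b) (f g : boundedDerivSet a b c K ℓ) (t : ℝ) :
    ‖f.1 t - g.1 t‖ ≤ (b - a) * dist (derivLp f) (derivLp g) :=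
  norm_sub_le_mul (C := nndist (derivLp f) (derivLp g)) hab f.2 g.2
    (fun _ hs => norm_deriv_sub_le_dist_derivLp f g hs) t

theorem derivLp_injective (hab : a < b) :
    Function.Injective (derivLp : boundedDerivSet a b c K ℓ → _) := by
  intro f g hfg
  ext t
  have hle := norm_sub_le_mul_dist_derivLp hab f g t
  rwa [hfg, dist_self, mul_zero, norm_le_zero_iff, sub_eq_zero] at hle

theorem isClosed_range_derivLp [CompleteSpace E] (hab : a < b) :
    IsClosed (range (derivLp : boundedDerivSet a b c K ℓ → _)) := by
  refine IsSeqClosed.isClosed fun v φ hv hφ => ?_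
  choose u hu using hv
  obtain rfl : (fun n => derivLp (u n)) = v := funext hu
  have hcauchy : UniformCauchySeqOn (fun n => (u n).1) atTop univ :=
    uniformCauchySeqOn_of_dist_le_mul hφ.cauchySeq fun m n t _ =>
      (dist_eq_norm _ _).trans_le (norm_sub_le_mul_dist_derivLp hab (u m) (u n) t)
  have hcauchy_deriv : UniformCauchySeqOn (fun n => deriv (u n).1) atTop (Ioo a b) :=
    uniformCauchySeqOn_of_dist_le_mul (C := 1) hφ.cauchySeq fun m n t ht => by
      rw [one_mul, dist_eq_norm]
      exact norm_deriv_sub_le_dist_derivLp (u m) (u n) ht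
  obtain ⟨F, hF⟩ := exists_tendstoUniformlyOn_of_uniformCauchySeqOn hcauchy
  have hderiv (t : ℝ) (ht : t ∈ Ioo a b) :=
    differentiableAt_and_tendsto_deriv_of_uniformCauchySeqOn isOpen_Ioo
      (fun n _ => differentiableAt_of_mem (u n).2) hcauchy_deriv
      (fun s _ => hF.tendsto_at (mem_univ s)) ht
  refine ⟨⟨F, mem_of_tendstoUniformlyOn (fun n => (u n).2) hF hderiv⟩, ?_⟩
  ext t
  exact tendsto_nhds_unique (hderiv t t.2).2
    (((lp.uniformContinuous_coe.continuous.tendsto φ).comp hφ).apply_nhds t)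

end boundedDerivSet

end BoundedDeriv

open boundedDerivSet in
theorem complete_metric_space_of_derivative_sup_distance_general {E : Type*}
    [NormedAddCommGroup E] [NormedSpace ℝ E] [CompleteSpace E] {a b : ℝ} (hab : a < b)
    (c : E) (K ℓ : ℝ) :
    ∃ m : MetricSpace (boundedDerivSet a b c K ℓ),
      (∀ f g, m.toDist.dist f g = ⨆ t : Ioo a b, ‖deriv f.1 t - deriv g.1 t‖) ∧
        @CompleteSpace _ m.toUniformSpace := by
  refine ⟨.induced derivLp (derivLp_injective hab) inferInstance, fun f g => ?_, ?_⟩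
  · exact (dist_eq_norm (derivLp f) (derivLp g)).trans (lp.norm_eq_ciSup _)
  · exact completeSpace_comap_of_isClosed_range (isClosed_range_derivLp hab)

/-- The set `X = C^{0,ℓ}_0([0,1/2])` of continuous functions on `[0,1/2]`
with value `c` at `0`, sup-norm bound `K₂`, differentiable on `(0,1/2)` with `|f'| ≤ ℓ`
(functions on `[0,1/2]` are modelled as functions on `ℝ` that are constant to the left
of `0` and to the right of `1/2`), equipped with
`d(f,g) = sup_{t ∈ (0,1/2)} |f'(t) - g'(t)|`, is a complete metric space. -/
theorem complete_metric_space_of_derivative_sup_distance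
    (ℓ K₂ c : ℝ) (hℓ : 0 < ℓ) (hK₂ : 0 < K₂) (hc : |c| ≤ K₂) :
    ∃ m : MetricSpace {f : ℝ → ℝ //
        ContinuousOn f (Set.Icc 0 (1 / 2)) ∧ f 0 = c ∧
        (∀ t ∈ Set.Icc (0 : ℝ) (1 / 2), |f t| ≤ K₂) ∧
        (∀ t ∈ Set.Ioo (0 : ℝ) (1 / 2), DifferentiableAt ℝ f t ∧ |deriv f t| ≤ ℓ) ∧
        (∀ t : ℝ, t ≤ 0 → f t = f 0) ∧ (∀ t : ℝ, 1 / 2 ≤ t → f t = f (1 / 2))},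
      (∀ f g, m.toDist.dist f g = dd f.1 g.1) ∧
        @CompleteSpace _ m.toUniformSpace := by
  exact complete_metric_space_of_derivative_sup_distance_general (by norm_num) c K₂ ℓ
end

section
/- In the setting below, suppose ℓ ≥ τK₀ and |ε| ≤ 1/(2K₂). Then for every w ∈ C^{0,ℓ}_0([0,1/2]): (i) −3/2 ≤ s − 1 + ε w(s) ≤ 0 for all s ∈ [0,1/2], so that O_z(w) is well defined; (ii) O_z(w)(0) = z(0); (iii) sup_{t∈[0,1/2]} |O_z(w)(t)| ≤ K₂; and (iv) O_z(w) is differentiable on (0,1/2) with (O_z(w))′(t) = τ F(z(t − 1 + ε w(t))) and |(O_z(w))′(t)| ≤ τK₀ ≤ ℓ for all t ∈ (0,1/2). In particular O_z maps C^{0,ℓ}_0([0,1/2]) into itself. -/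
/-- `f ∈ C^{0,ℓ}([a,b])`: continuous on `[a,b]`, differentiable on `(a,b)` with `|f'| ≤ ℓ`. -/
def memC (a b ℓ : ℝ) (f : ℝ → ℝ) : Prop :=
  ContinuousOn f (Set.Icc a b) ∧
    ∀ t ∈ Set.Ioo a b, DifferentiableAt ℝ f t ∧ |deriv f t| ≤ ℓ

/-- `f ∈ C^{0,ℓ}_0([0,1/2])` with prescribed value `c` at `0` and sup-norm bound `K₂`. -/
def mem0 (ℓ K₂ c : ℝ) (f : ℝ → ℝ) : Prop :=
  memC 0 (1 / 2) ℓ f ∧ f 0 = c ∧ ∀ t ∈ Set.Icc (0 : ℝ) (1 / 2), |f t| ≤ K₂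

/-- The operator `O_z(w)(t) = z(0) + τ ∫₀ᵗ F (z (s - 1 + ε w s)) ds`. -/
noncomputable def Oz (τ ε : ℝ) (F z w : ℝ → ℝ) : ℝ → ℝ := fun t =>
  z 0 + τ * ∫ s in (0 : ℝ)..t, F (z (s - 1 + ε * w s))

/-!
Since `|ε w| ≤ 1/2`, the delayed argument `s - 1 + ε w(s)` stays in `[-3/2, 0]`, where `|z| ≤ M`;
hence `G_w(s) = F (z (s - 1 + ε w(s)))` is continuous and bounded by `K₀`. As `O_z(w)` is the
primitive of `τ G_w` starting from `z(0)`, its derivative is bounded by `τ K₀`, and over a time at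
most `1/2` it moves away from `z(0)` by at most `τ K₀ / 2`.
-/

open Set intervalIntegral

theorem hasDerivWithinAt_integral_Icc {E : Type*} [NormedAddCommGroup E] [NormedSpace ℝ E]
    [CompleteSpace E] {g : ℝ → E} {a b t : ℝ} (hg : ContinuousOn g (Icc a b)) (ht : t ∈ Icc a b) :
    HasDerivWithinAt (fun u ↦ ∫ s in a..u, g s) (g t) (Icc a b) t := by
  have hint : IntervalIntegrable g MeasureTheory.volume a t :=
    (hg.mono (Icc_subset_Icc_right ht.2)).intervalIntegrable_of_Icc ht.1
  have : Fact (t ∈ Icc a b) := ⟨ht⟩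
  exact integral_hasDerivWithinAt_right hint
    (hg.stronglyMeasurableAtFilter_nhdsWithin measurableSet_Icc t) (hg t ht)

theorem memC_of_hasDerivWithinAt_Icc {a b ℓ : ℝ} {f f' : ℝ → ℝ}
    (hf : ∀ t ∈ Icc a b, HasDerivWithinAt f (f' t) (Icc a b) t)
    (hf' : ∀ t ∈ Ioo a b, |f' t| ≤ ℓ) : memC a b ℓ f := by
  refine ⟨fun t ht ↦ (hf t ht).continuousWithinAt, fun t ht ↦ ?_⟩
  have hderiv : HasDerivAt f (f' t) t :=
    (hf t (Ioo_subset_Icc_self ht)).hasDerivAt (Icc_mem_nhds ht.1 ht.2)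
  exact ⟨hderiv.differentiableAt, hderiv.deriv.symm ▸ hf' t ht⟩

theorem abs_mul_le_half_of_abs_le {ε x K : ℝ} (hK : 0 < K) (hε : |ε| ≤ 1 / (2 * K)) (hx : |x| ≤ K) :
    |ε * x| ≤ 1 / 2 :=
  calc |ε * x| = |ε| * |x| := abs_mul ε x
    _ ≤ 1 / (2 * K) * K := by gcongr
    _ = 1 / 2 := by field_simp

theorem abs_mul_le_mul_of_abs_le {c x K : ℝ} (hc : 0 ≤ c) (hx : |x| ≤ K) : |c * x| ≤ c * K := by
  rw [abs_mul, abs_of_nonneg hc]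
  gcongr

theorem delayed_argument_mem_Icc {s y : ℝ} (hs : s ∈ Icc 0 (1 / 2)) (hy : |y| ≤ 1 / 2) :
    s - 1 + y ∈ Icc (-(3 / 2)) 0 := by
  obtain ⟨hy_lower, hy_upper⟩ := abs_le.mp hy
  exact ⟨by linarith [hs.1], by linarith [hs.2]⟩

/-- The integrand `G_w(s) = F (z (s - 1 + ε w(s)))` of `O_z(w)`: the nonlinearity `F` evaluated
along the history `z` at the state-dependent delayed time. It is a total function of `s`, meaningful
where the delayed time lies in the domain `[-3/2, 0]` of `z`. -/
def delayedForcing (ε : ℝ) (F z w : ℝ → ℝ) (s : ℝ) : ℝ :=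
  F (z (s - 1 + ε * w s))

section Operator

variable {τ ε : ℝ} {F z w : ℝ → ℝ}

theorem continuousOn_delayedForcing {S T U : Set ℝ} (hF : ContinuousOn F U)
    (hz : ContinuousOn z T) (hw : ContinuousOn w S) (hzU : MapsTo z T U)
    (hdelay : MapsTo (fun s ↦ s - 1 + ε * w s) S T) :
    ContinuousOn (delayedForcing ε F z w) S :=
  hF.comp (hz.comp (by fun_prop) hdelay) (hzU.comp hdelay)

theorem Oz_zero : Oz τ ε F z w 0 = z 0 := by
  simp [Oz]

theorem hasDerivWithinAt_Oz {b t : ℝ} (hG : ContinuousOn (delayedForcing ε F z w) (Icc 0 b))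
    (ht : t ∈ Icc 0 b) :
    HasDerivWithinAt (Oz τ ε F z w) (τ * delayedForcing ε F z w t) (Icc 0 b) t :=
  ((hasDerivWithinAt_integral_Icc hG ht).const_mul τ).const_add (z 0)

theorem abs_Oz_le {K t : ℝ} (ht : 0 ≤ t)
    (hG : ∀ s ∈ Ioc 0 t, |delayedForcing ε F z w s| ≤ K) :
    |Oz τ ε F z w t| ≤ |z 0| + |τ| * (K * t) := by
  have hint : |∫ s in 0..t, delayedForcing ε F z w s| ≤ K * t := by
    simp only [← uIoc_of_le ht, ← Real.norm_eq_abs] at hG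
    simpa [abs_of_nonneg ht] using norm_integral_le_of_norm_le_const hG
  calc |Oz τ ε F z w t| ≤ |z 0| + |τ * ∫ s in 0..t, delayedForcing ε F z w s| := abs_add_le _ _
    _ ≤ |z 0| + |τ| * (K * t) := by rw [abs_mul]; gcongr

theorem mem0_Oz {M K ℓ : ℝ} (hτ : 0 ≤ τ) (hz : |z 0| ≤ M)
    (hG : ContinuousOn (delayedForcing ε F z w) (Icc 0 (1 / 2)))
    (hGK : ∀ s ∈ Icc 0 (1 / 2), |delayedForcing ε F z w s| ≤ K) (hℓ : τ * K ≤ ℓ) :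
    mem0 ℓ (M + τ * K / 2) (z 0) (Oz τ ε F z w) := by
  have hslope : ∀ t ∈ Ioo 0 (1 / 2), |τ * delayedForcing ε F z w t| ≤ ℓ := fun t ht ↦
    (abs_mul_le_mul_of_abs_le hτ (hGK t (Ioo_subset_Icc_self ht))).trans hℓ
  have hK : 0 ≤ K := (abs_nonneg _).trans (hGK 0 (by norm_num))
  refine ⟨memC_of_hasDerivWithinAt_Icc (fun _ ↦ hasDerivWithinAt_Oz hG) hslope, Oz_zero,
    fun t ht ↦ ?_⟩
  calc |Oz τ ε F z w t| ≤ |z 0| + |τ| * (K * t) :=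
        abs_Oz_le ht.1 fun s hs ↦ hGK s ⟨hs.1.le, hs.2.trans ht.2⟩
    _ ≤ M + τ * (K * (1 / 2)) := by
        rw [abs_of_nonneg hτ]
        gcongr
        exact ht.2
    _ = M + τ * K / 2 := by ring

end Operator

theorem Oz_well_defined_and_self_map_general
    {τ M ℓ ε K₀ K₂ : ℝ} {F z w : ℝ → ℝ} (hτ : 0 ≤ τ) (hM : 0 < M)
    (hF : ContinuousOn F (Icc (-M) M))
    (hK₀ : K₀ = ⨆ ξ : Icc (-M) M, |F ξ.1|)
    (hK₂ : K₂ = M + τ * K₀ / 2)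
    (hz : ContinuousOn z (Icc (-(3 / 2)) 0))
    (hzM : ∀ t ∈ Icc (-(3 / 2) : ℝ) 0, |z t| ≤ M)
    (hℓ : τ * K₀ ≤ ℓ)
    (hε : |ε| ≤ 1 / (2 * K₂))
    (hw : ContinuousOn w (Icc 0 (1 / 2)))
    (hwK₂ : ∀ t ∈ Icc (0 : ℝ) (1 / 2), |w t| ≤ K₂) :
    (∀ s ∈ Icc (0 : ℝ) (1 / 2), s - 1 + ε * w s ∈ Icc (-(3 / 2) : ℝ) 0) ∧
    Oz τ ε F z w 0 = z 0 ∧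
    (∀ t ∈ Icc (0 : ℝ) (1 / 2), |Oz τ ε F z w t| ≤ K₂) ∧
    (∀ t ∈ Ioo (0 : ℝ) (1 / 2),
      HasDerivAt (Oz τ ε F z w) (τ * F (z (t - 1 + ε * w t))) t ∧
      |τ * F (z (t - 1 + ε * w t))| ≤ τ * K₀ ∧ τ * K₀ ≤ ℓ) ∧
    mem0 ℓ K₂ (z 0) (Oz τ ε F z w) := by
  have hFK₀ : ∀ ξ ∈ Icc (-M) M, |F ξ| ≤ K₀ := fun ξ hξ ↦
    hK₀ ▸ le_ciSup_set (isCompact_Icc.bddAbove_image hF.abs) hξ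
  have hK₀_nonneg : 0 ≤ K₀ := hK₀ ▸ Real.iSup_nonneg fun _ ↦ abs_nonneg _
  have hK₂_pos : 0 < K₂ := by rw [hK₂]; positivity
  have hdelay : ∀ s ∈ Icc (0 : ℝ) (1 / 2), s - 1 + ε * w s ∈ Icc (-(3 / 2) : ℝ) 0 := fun s hs ↦
    delayed_argument_mem_Icc hs (abs_mul_le_half_of_abs_le hK₂_pos hε (hwK₂ s hs))
  have hzIcc : MapsTo z (Icc (-(3 / 2)) 0) (Icc (-M) M) := fun t ht ↦ abs_le.mp (hzM t ht)
  have hG : ContinuousOn (delayedForcing ε F z w) (Icc 0 (1 / 2)) :=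
    continuousOn_delayedForcing hF hz hw hzIcc hdelay
  have hGK₀ : ∀ s ∈ Icc (0 : ℝ) (1 / 2), |delayedForcing ε F z w s| ≤ K₀ := fun s hs ↦
    hFK₀ _ (hzIcc (hdelay s hs))
  have hmem : mem0 ℓ K₂ (z 0) (Oz τ ε F z w) :=
    hK₂ ▸ mem0_Oz hτ (hzM 0 (by norm_num)) hG hGK₀ hℓ
  refine ⟨hdelay, Oz_zero, hmem.2.2, fun t ht ↦ ⟨?_, ?_, hℓ⟩, hmem⟩
  · exact (hasDerivWithinAt_Oz hG (Ioo_subset_Icc_self ht)).hasDerivAt (Icc_mem_nhds ht.1 ht.2)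
  · exact abs_mul_le_mul_of_abs_le hτ (hGK₀ t (Ioo_subset_Icc_self ht))

/-- for `ℓ ≥ τK₀` and `|ε| ≤ 1/(2K₂)`, the operator `O_z` is well defined
on `C^{0,ℓ}_0([0,1/2])` and maps it into itself. -/
theorem Oz_well_defined_and_self_map
    (τ M ℓ ε K₀ K₂ : ℝ) (F z : ℝ → ℝ)
    (hτ : 0 < τ) (hM : 1 < M) (hℓpos : 0 < ℓ)
    (hF : ContDiff ℝ 1 F)
    (hK₀ : K₀ = ⨆ ξ : Set.Icc (-M) M, |F ξ.1|)
    (hK₂ : K₂ = M + τ * K₀ / 2)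
    (hz : memC (-(3 / 2)) 0 ℓ z)
    (hzM : ∀ t ∈ Set.Icc (-(3 / 2) : ℝ) 0, |z t| ≤ M)
    (hℓ : τ * K₀ ≤ ℓ)
    (hε : |ε| ≤ 1 / (2 * K₂))
    (w : ℝ → ℝ) (hw : mem0 ℓ K₂ (z 0) w) :
    (∀ s ∈ Set.Icc (0 : ℝ) (1 / 2), s - 1 + ε * w s ∈ Set.Icc (-(3 / 2) : ℝ) 0) ∧
    Oz τ ε F z w 0 = z 0 ∧
    (∀ t ∈ Set.Icc (0 : ℝ) (1 / 2), |Oz τ ε F z w t| ≤ K₂) ∧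
    (∀ t ∈ Set.Ioo (0 : ℝ) (1 / 2),
      HasDerivAt (Oz τ ε F z w) (τ * F (z (t - 1 + ε * w t))) t ∧
      |τ * F (z (t - 1 + ε * w t))| ≤ τ * K₀ ∧ τ * K₀ ≤ ℓ) ∧
    mem0 ℓ K₂ (z 0) (Oz τ ε F z w) :=
  Oz_well_defined_and_self_map_general hτ.le (one_pos.trans hM) hF.continuous.continuousOn
    hK₀ hK₂ hz.1 hzM hℓ hε hw.1.1 hw.2.2
end

section
/- In the setting below, suppose ℓ ≥ τK₀ and |ε| ≤ 1/(2K₂). Then for all w₁, w₂ ∈ C^{0,ℓ}_0([0,1/2]) and all s ∈ [0,1/2], |G_{w₁}(s) − G_{w₂}(s)| ≤ |ε| ℓ (K₁/2) d(w₁, w₂); that is, sup_{s∈[0,1/2]} |F(z(s − 1 + ε w₁(s))) − F(z(s − 1 + ε w₂(s)))| is bounded by |ε| ℓ K₁/2 times the supremum distance between the derivatives of w₁ and w₂. -/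
/-! The factor `1 / 2` is the length of the interval: `w₁ - w₂` vanishes at `0`, so the mean value
inequality gives `|w₁ s - w₂ s| ≤ dd w₁ w₂ / 2`. The bound on `ε` keeps the delayed times
`s - 1 + ε * wᵢ s` in `[-3/2, 0]`, where `F ∘ z` is Lipschitz with constant `K₁ * ℓ`. -/

open Set
open scoped NNReal

theorem memC.abs_sub_le {a b C x y : ℝ} {f : ℝ → ℝ} (hf : memC a b C f)
    (hx : x ∈ Icc a b) (hy : y ∈ Icc a b) : |f x - f y| ≤ C * |x - y| := by
  wlog hyx : y ≤ x generalizing x y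
  · rw [abs_sub_comm, abs_sub_comm x]
    exact this hy hx (le_of_not_ge hyx)
  have hdiff : DifferentiableOn ℝ f (interior (Icc a b)) := by
    rw [interior_Icc]
    exact fun t ht => (hf.2 t ht).1.differentiableWithinAt
  have hderiv : ∀ t ∈ interior (Icc a b), -C ≤ deriv f t ∧ deriv f t ≤ C := by
    rw [interior_Icc]
    exact fun t ht => abs_le.1 (hf.2 t ht).2
  have hlower : -C * (x - y) ≤ f x - f y :=
    (convex_Icc a b).mul_sub_le_image_sub_of_le_deriv hf.1 hdiff
      (fun t ht => (hderiv t ht).1) y hy x hx hyx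
  have hupper : f x - f y ≤ C * (x - y) :=
    (convex_Icc a b).image_sub_le_mul_sub_of_deriv_le hf.1 hdiff
      (fun t ht => (hderiv t ht).2) y hy x hx hyx
  rw [abs_of_nonneg (sub_nonneg.2 hyx)]
  exact abs_le.2 ⟨by linarith, hupper⟩

theorem memC.lipschitzOnWith {a b : ℝ} {C : ℝ≥0} {f : ℝ → ℝ} (hf : memC a b C f) :
    LipschitzOnWith C f (Icc a b) :=
  LipschitzOnWith.of_dist_le_mul fun _ hx _ hy => hf.abs_sub_le hx hy

theorem memC_iSup_abs_deriv {f : ℝ → ℝ} (hf : ContDiff ℝ 1 f) (a b : ℝ) :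
    memC a b (⨆ t : Icc a b, |deriv f t.1|) f := by
  have hcont : Continuous fun t : Icc a b => |deriv f t.1| :=
    ((hf.continuous_deriv le_rfl).comp continuous_subtype_val).abs
  refine ⟨hf.continuous.continuousOn, fun t ht => ⟨hf.differentiable one_ne_zero t, ?_⟩⟩
  exact le_ciSup (isCompact_range hcont).bddAbove ⟨t, Ioo_subset_Icc_self ht⟩

theorem dd_nonneg (f g : ℝ → ℝ) : 0 ≤ dd f g :=
  Real.iSup_nonneg fun _ => abs_nonneg _

section

variable {ℓ₁ ℓ₂ : ℝ} {f g : ℝ → ℝ}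

theorem memC.abs_deriv_sub_deriv_le_dd (hf : memC 0 (1 / 2) ℓ₁ f) (hg : memC 0 (1 / 2) ℓ₂ g)
    {t : ℝ} (ht : t ∈ Ioo (0 : ℝ) (1 / 2)) : |deriv f t - deriv g t| ≤ dd f g := by
  have hbdd : BddAbove (range fun u : Ioo (0 : ℝ) (1 / 2) => |deriv f u.1 - deriv g u.1|) := by
    refine ⟨ℓ₁ + ℓ₂, ?_⟩
    rintro _ ⟨u, rfl⟩
    exact (abs_sub _ _).trans (add_le_add (hf.2 u u.2).2 (hg.2 u u.2).2)
  exact le_ciSup hbdd ⟨t, ht⟩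

theorem memC.sub_dd (hf : memC 0 (1 / 2) ℓ₁ f) (hg : memC 0 (1 / 2) ℓ₂ g) :
    memC 0 (1 / 2) (dd f g) (f - g) := by
  refine ⟨hf.1.sub hg.1, fun t ht => ⟨(hf.2 t ht).1.sub (hg.2 t ht).1, ?_⟩⟩
  rw [deriv_sub (hf.2 t ht).1 (hg.2 t ht).1]
  exact hf.abs_deriv_sub_deriv_le_dd hg ht

theorem memC.abs_sub_le_dd_div_two (hf : memC 0 (1 / 2) ℓ₁ f) (hg : memC 0 (1 / 2) ℓ₂ g)
    (h₀ : f 0 = g 0) {s : ℝ} (hs : s ∈ Icc (0 : ℝ) (1 / 2)) : |f s - g s| ≤ dd f g / 2 :=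
  calc |f s - g s| = |(f - g) s - (f - g) 0| := by simp [h₀]
    _ ≤ dd f g * |s - 0| := (hf.sub_dd hg).abs_sub_le hs (by norm_num)
    _ = dd f g * s := by rw [sub_zero, abs_of_nonneg hs.1]
    _ ≤ dd f g * (1 / 2) := mul_le_mul_of_nonneg_left hs.2 (dd_nonneg f g)
    _ = dd f g / 2 := by ring

end

theorem mem0.delay_mem_Icc {ℓ K c ε s : ℝ} {w : ℝ → ℝ} (hw : mem0 ℓ K c w)
    (hε : |ε| * K ≤ 1 / 2) (hs : s ∈ Icc (0 : ℝ) (1 / 2)) :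
    s - 1 + ε * w s ∈ Icc (-(3 / 2) : ℝ) 0 := by
  have hεw : |ε * w s| ≤ 1 / 2 := by
    rw [abs_mul]
    exact (mul_le_mul_of_nonneg_left (hw.2.2 s hs) (abs_nonneg ε)).trans hε
  obtain ⟨hlower, hupper⟩ := abs_le.1 hεw
  exact ⟨by linarith [hs.1], by linarith [hs.2]⟩

theorem mul_le_half_of_le_one_div_two_mul {a K : ℝ} (ha : 0 ≤ a) (h : a ≤ 1 / (2 * K)) :
    a * K ≤ 1 / 2 := by
  rcases le_or_gt K 0 with hK | hK
  · linarith [mul_nonpos_of_nonneg_of_nonpos ha hK]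
  · rw [le_div_iff₀ (by positivity)] at h
    linarith

theorem Gw_lipschitz_estimate_general {ℓ K₁ : ℝ≥0} {ε K₂ c ℓ₁ ℓ₂ : ℝ} {F z w₁ w₂ : ℝ → ℝ}
    {S : Set ℝ} (hF : LipschitzOnWith K₁ F S) (hz : LipschitzOnWith ℓ z (Icc (-(3 / 2)) 0))
    (hzS : MapsTo z (Icc (-(3 / 2)) 0) S) (hε : |ε| * K₂ ≤ 1 / 2)
    (hw₁ : mem0 ℓ₁ K₂ c w₁) (hw₂ : mem0 ℓ₂ K₂ c w₂) {s : ℝ} (hs : s ∈ Icc (0 : ℝ) (1 / 2)) :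
    |F (z (s - 1 + ε * w₁ s)) - F (z (s - 1 + ε * w₂ s))| ≤
      |ε| * ℓ * (K₁ / 2) * dd w₁ w₂ := by
  have hw : |w₁ s - w₂ s| ≤ dd w₁ w₂ / 2 :=
    hw₁.1.abs_sub_le_dd_div_two hw₂.1 (hw₁.2.1.trans hw₂.2.1.symm) hs
  calc |F (z (s - 1 + ε * w₁ s)) - F (z (s - 1 + ε * w₂ s))|
      ≤ ↑(K₁ * ℓ) * |(s - 1 + ε * w₁ s) - (s - 1 + ε * w₂ s)| :=
        (hF.comp hz hzS).dist_le_mul _ (hw₁.delay_mem_Icc hε hs) _ (hw₂.delay_mem_Icc hε hs)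
    _ = K₁ * ℓ * (|ε| * |w₁ s - w₂ s|) := by
        rw [add_sub_add_left_eq_sub, ← mul_sub, abs_mul, NNReal.coe_mul]
    _ ≤ K₁ * ℓ * (|ε| * (dd w₁ w₂ / 2)) := by gcongr
    _ = |ε| * ℓ * (K₁ / 2) * dd w₁ w₂ := by ring

/-- for `ℓ ≥ τK₀` and `|ε| ≤ 1/(2K₂)`, for all `w₁, w₂ ∈ C^{0,ℓ}_0([0,1/2])`
and `s ∈ [0,1/2]`, `|G_{w₁}(s) - G_{w₂}(s)| ≤ |ε| ℓ (K₁/2) d(w₁,w₂)`. -/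
theorem Gw_lipschitz_estimate
    (τ M ℓ ε K₀ K₁ K₂ : ℝ) (F z : ℝ → ℝ)
    (hτ : 0 < τ) (hM : 1 < M) (hℓpos : 0 < ℓ)
    (hF : ContDiff ℝ 1 F)
    (hK₀ : K₀ = ⨆ ξ : Set.Icc (-M) M, |F ξ.1|)
    (hK₁ : K₁ = ⨆ ξ : Set.Icc (-M) M, |deriv F ξ.1|)
    (hK₂ : K₂ = M + τ * K₀ / 2)
    (hz : memC (-(3 / 2)) 0 ℓ z)
    (hzM : ∀ t ∈ Set.Icc (-(3 / 2) : ℝ) 0, |z t| ≤ M)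
    (hℓ : τ * K₀ ≤ ℓ)
    (hε : |ε| ≤ 1 / (2 * K₂))
    (w₁ w₂ : ℝ → ℝ) (hw₁ : mem0 ℓ K₂ (z 0) w₁) (hw₂ : mem0 ℓ K₂ (z 0) w₂) :
    ∀ s ∈ Set.Icc (0 : ℝ) (1 / 2),
      |F (z (s - 1 + ε * w₁ s)) - F (z (s - 1 + ε * w₂ s))| ≤
        |ε| * ℓ * (K₁ / 2) * dd w₁ w₂ := by
  lift ℓ to ℝ≥0 using hℓpos.le
  lift K₁ to ℝ≥0 using hK₁ ▸ Real.iSup_nonneg fun _ => abs_nonneg _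
  have hFC : memC (-M) M K₁ F := hK₁ ▸ memC_iSup_abs_deriv hF (-M) M
  exact fun s hs => Gw_lipschitz_estimate_general hFC.lipschitzOnWith hz.lipschitzOnWith
    (fun t ht => abs_le.1 (hzM t ht)) (mul_le_half_of_le_one_div_two_mul (abs_nonneg ε) hε)
    hw₁ hw₂ hs
end
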